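/- arXiv:1907.05258 — 4 statements merged into one kernel-verified Lean document; each statement's English description precedes it below -/
import Mathlib

section
/- Let k, l ≥ 0 and let f : ℝᵏ × ℝˡ → ℝ be infinitely differentiable (C^∞) with f(x, 0) = 0 for all x ∈ ℝᵏ. Define g : ℝᵏ × ℝˡ × ℝ → ℝ by g(x, v, t) = f(x, t·v)/t for t ≠ 0, and g(x, v, 0) = (Df(x,0))(0, v), the Fréchet derivative of f at (x,0) applied to the vector (0,v). Then g is infinitely differentiable (C^∞) on all of ℝᵏ × ℝˡ × ℝ. -/
/-!
By the fundamental theorem of calculus along the segment from `a` to `a + t • w`, the difference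
quotient `t⁻¹ • (f (a + t • w) - f a)` equals the average `∫ s in 0..1, Df (a + (s * t) • w) w`,
which makes sense for `t = 0` as well, where its value is `Df a w`. The integrand is as smooth as
`Df` and the interval is compact, so the average depends smoothly on `(a, w, t)`. Since `f`
vanishes on `V`, the function `f^{dnc}` is this extended difference quotient at `a = (x, 0)` in the
normal direction `w = (0, v)`.
-/

open Function MeasureTheory Set Topology

universe u v

section ParametricIntegral

theorem exists_eventually_forall_norm_le_of_isCompact {X Y G : Type*} [TopologicalSpace X]
    [TopologicalSpace Y] [SeminormedAddCommGroup G] {F : X → Y → G} {K : Set Y}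
    (hK : IsCompact K) (hF : Continuous (uncurry F)) (x₀ : X) :
    ∃ C, ∀ᶠ x in 𝓝 x₀, ∀ y ∈ K, ‖F x y‖ ≤ C := by
  obtain ⟨C, hC⟩ := hK.exists_bound_of_continuousOn (hF.uncurry_left x₀).continuousOn
  refine ⟨C + 1, hK.eventually_forall_of_forall_eventually fun y hy => ?_⟩
  have hlt : ‖uncurry F (x₀, y)‖ < C + 1 := (hC y hy).trans_lt (lt_add_one C)
  exact (hF.norm.continuousAt.eventually_lt_const hlt).mono fun _ h => h.le

theorem intervalIntegral_comp_continuousLinearEquiv {G H : Type*} [NormedAddCommGroup G]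
    [NormedSpace ℝ G] [NormedAddCommGroup H] [NormedSpace ℝ H] {μ : Measure ℝ} (L : G ≃L[ℝ] H)
    (φ : ℝ → G) (a b : ℝ) :
    ∫ s in a..b, L (φ s) ∂μ = L (∫ s in a..b, φ s ∂μ) := by
  simp only [intervalIntegral, L.integral_comp_comm, map_sub]

variable {E : Type u} [NormedAddCommGroup E] [NormedSpace ℝ E] {μ : Measure ℝ}
  [IsLocallyFiniteMeasure μ]

theorem hasFDerivAt_intervalIntegral_of_continuous {G : Type*} [NormedAddCommGroup G]
    [NormedSpace ℝ G] {F : E → ℝ → G} {F' : E → ℝ → E →L[ℝ] G}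
    (hF : ∀ x, Continuous (F x)) (hF' : Continuous (uncurry F'))
    (hderiv : ∀ x s, HasFDerivAt (F · s) (F' x s) x) (a b : ℝ) (x₀ : E) :
    HasFDerivAt (fun x => ∫ s in a..b, F x s ∂μ) (∫ s in a..b, F' x₀ s ∂μ) x₀ := by
  obtain ⟨C, hC⟩ := exists_eventually_forall_norm_le_of_isCompact isCompact_uIcc hF' x₀
  exact intervalIntegral.hasFDerivAt_integral_of_dominated_of_fderiv_le hC
    (.of_forall fun x => (hF x).aestronglyMeasurable) ((hF x₀).intervalIntegrable a b)
    (hF'.uncurry_left x₀).aestronglyMeasurable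
    (.of_forall fun s hs x hx => hx s (uIoc_subset_uIcc hs)) intervalIntegrable_const
    (.of_forall fun s _ x _ => hderiv x s)

variable [NullSingletonClass μ]

-- The induction replaces `G` by `E →L[ℝ] G`, so the universe of `G` must contain that of `E`.
theorem contDiff_nat_intervalIntegral {n : ℕ} {G : Type (max u v)} [NormedAddCommGroup G]
    [NormedSpace ℝ G] {F : E → ℝ → G} (hF : ContDiff ℝ n (uncurry F)) (a b : ℝ) :
    ContDiff ℝ n fun x => ∫ s in a..b, F x s ∂μ := by
  induction n generalizing G with
  | zero =>
    exact contDiff_zero.2 <|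
      intervalIntegral.continuous_parametric_intervalIntegral_of_continuous' hF.continuous a b
  | succ n ih =>
    obtain ⟨F', hF', hderiv⟩ := contDiff_succ_iff_hasFDerivAt.1 hF
    let partialLeft (x : E) (s : ℝ) : E →L[ℝ] G := (F' (x, s)).comp (.inl ℝ E ℝ)
    have hpartial : ContDiff ℝ n (uncurry partialLeft) := hF'.clm_comp contDiff_const
    have hderiv_partial (x : E) (s : ℝ) : HasFDerivAt (F · s) (partialLeft x s) x :=
      HasFDerivAt.comp (g := uncurry F) (f := (·, s)) x (hderiv (x, s))
        (hasFDerivAt_prodMk_left x s)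
    exact contDiff_succ_iff_hasFDerivAt.2 ⟨fun x => ∫ s in a..b, partialLeft x s ∂μ, ih hpartial,
      hasFDerivAt_intervalIntegral_of_continuous (fun x => hF.continuous.uncurry_left x)
        hpartial.continuous hderiv_partial a b⟩

theorem contDiff_intervalIntegral {n : ℕ∞} {G : Type v} [NormedAddCommGroup G]
    [NormedSpace ℝ G] {F : E → ℝ → G} (hF : ContDiff ℝ n (uncurry F)) (a b : ℝ) :
    ContDiff ℝ n fun x => ∫ s in a..b, F x s ∂μ := by
  let lift : ULift.{u} G ≃L[ℝ] G := ContinuousLinearEquiv.ulift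
  refine contDiff_iff_forall_nat_le.2 fun m hm => ?_
  have hlifted : ContDiff ℝ m (uncurry fun x s => lift.symm (F x s)) :=
    lift.symm.contDiff.comp (hF.of_le (mod_cast hm))
  simpa only [intervalIntegral_comp_continuousLinearEquiv, comp_def, lift.apply_symm_apply]
    using lift.contDiff.comp (contDiff_nat_intervalIntegral.{u, v} (μ := μ) hlifted a b)

end ParametricIntegral

section DifferenceQuotient

variable {E G : Type*} [NormedAddCommGroup E] [NormedSpace ℝ E] [NormedAddCommGroup G]
  [NormedSpace ℝ G] {f : E → G}

/-- The difference quotient of `f` at `a` in the direction `w` with step `t`, as a function of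
`(a, w, t)`, extended to `t = 0` by the derivative `Df a w`. The function `f^{dnc}` on the
deformation to the normal cone is a restriction of it. -/
noncomputable def differenceQuotient (f : E → G) : E × E × ℝ → G := fun (a, w, t) =>
  if t = 0 then fderiv ℝ f a w else t⁻¹ • (f (a + t • w) - f a)

theorem integral_fderiv_add_smul_apply [CompleteSpace G] (hf : ContDiff ℝ 1 f) (a w : E) :
    ∫ s in (0 : ℝ)..1, fderiv ℝ f (a + s • w) w = f (a + w) - f a := by
  have htaylor := map_add_eq_sum_add_integral_iteratedFDeriv (n := 0) (f := f) (x := a) (y := w)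
    fun _ _ => by simpa using hf.contDiffAt
  simp [htaylor]

theorem differenceQuotient_eq_integral [CompleteSpace G] (hf : ContDiff ℝ 1 f) (a w : E) (t : ℝ) :
    differenceQuotient f (a, w, t)
      = ∫ s in (0 : ℝ)..1, fderiv ℝ f (a + (s * t) • w) w := by
  by_cases ht : t = 0
  · simp [differenceQuotient, ht]
  · simp [differenceQuotient, ht, ← integral_fderiv_add_smul_apply hf, smul_smul]

theorem contDiff_differenceQuotient [CompleteSpace G] {n : ℕ∞} (hf : ContDiff ℝ (n + 1) f) :
    ContDiff ℝ n (differenceQuotient f) := by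
  have hf' : ContDiff ℝ n (fderiv ℝ f) := hf.fderiv_right le_rfl
  have heq : differenceQuotient f = fun p : E × E × ℝ =>
      ∫ s in (0 : ℝ)..1, fderiv ℝ f (p.1 + (s * p.2.2) • p.2.1) p.2.1 :=
    funext fun (a, w, t) => differenceQuotient_eq_integral (hf.of_le le_add_self) a w t
  rw [heq]
  refine contDiff_intervalIntegral ?_ 0 1
  exact (hf'.comp (by fun_prop)).clm_apply (by fun_prop)

end DifferenceQuotient

theorem stmt1_general {E F G : Type*} [NormedAddCommGroup E] [NormedSpace ℝ E]
    [NormedAddCommGroup F] [NormedSpace ℝ F] [NormedAddCommGroup G] [NormedSpace ℝ G]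
    [CompleteSpace G] {n : ℕ∞} {f : E × F → G} (hf : ContDiff ℝ (n + 1) f)
    (hf0 : ∀ x, f (x, 0) = 0) {g : E × F × ℝ → G}
    (hg_ne : ∀ x v t, t ≠ 0 → g (x, v, t) = t⁻¹ • f (x, t • v))
    (hg_zero : ∀ x v, g (x, v, 0) = fderiv ℝ f (x, 0) (0, v)) :
    ContDiff ℝ n g := by
  have hg : g = fun p => differenceQuotient f ((p.1, 0), (0, p.2.1), p.2.2) := by
    funext ⟨x, v, t⟩
    by_cases ht : t = 0
    · simp [differenceQuotient, ht, hg_zero]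
    · simp [differenceQuotient, ht, hg_ne, hf0]
  rw [hg]
  exact (contDiff_differenceQuotient hf).comp (by fun_prop)

/-- Local model of the smooth structure on the deformation to the normal cone
`DNC(M, V)` for `M = ℝᵏ × ℝˡ`, `V = ℝᵏ × {0}`: if `f` is smooth and vanishes on `V`,
then `g (x, v, t) = f (x, t v) / t` (for `t ≠ 0`), `g (x, v, 0) = Df (x, 0) (0, v)`,
is smooth. -/
theorem stmt1 (k l : ℕ) (f : (Fin k → ℝ) × (Fin l → ℝ) → ℝ)
    (hf : ContDiff ℝ (⊤ : ℕ∞) f) (hf0 : ∀ x : Fin k → ℝ, f (x, 0) = 0)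
    (g : (Fin k → ℝ) × (Fin l → ℝ) × ℝ → ℝ)
    (hg_ne : ∀ (x : Fin k → ℝ) (v : Fin l → ℝ) (t : ℝ), t ≠ 0 →
      g (x, v, t) = f (x, t • v) / t)
    (hg_zero : ∀ (x : Fin k → ℝ) (v : Fin l → ℝ),
      g (x, v, 0) = fderiv ℝ f (x, 0) (0, v)) :
    ContDiff ℝ (⊤ : ℕ∞) g :=
  stmt1_general (n := ⊤) (by simpa using hf) hf0
    (fun x v t ht => by rw [hg_ne x v t ht, div_eq_inv_mul, smul_eq_mul]) hg_zero
end

section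
/- Let n ≥ 1 and m ∈ ℤ. Let a : ℝⁿ → ℂ be a classical symbol of order m, i.e. a is C^∞ and there is a sequence (a_{m−j})_{j∈ℕ} of C^∞ functions on ℝⁿ∖{0}, with a_{m−j} positively homogeneous of degree m−j, such that for every k ≥ 1 and every i ∈ ℕ there is a constant M with: for all ξ with ‖ξ‖ ≥ 1, the i-th iterated Fréchet derivative of the function ξ ↦ a(ξ) − Σ_{j<k} a_{m−j}(ξ) (computed within the open set {‖ξ‖ > 1/2}) at ξ has norm at most M·‖ξ‖^(m−k−i). Define b : ℝⁿ × ℝ → ℂ by b(ξ, t) = t^m · a(ξ/t) for t > 0, b(ξ, 0) = a_m(ξ) for ξ ≠ 0, and b = 0 elsewhere. Then: (1) b is C^∞ on the set (ℝⁿ∖{0}) × [0, ∞) in the sense of differentiability within this set (ContDiffOn of infinite order); and (2) b(λ·ξ, λ·t) = λ^m · b(ξ, t) for every λ > 0, ξ ≠ 0 and t ≥ 0. -/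
open Set

/-!
Subtract from `b` the partial sum `∑_{j < k} t ^ j • a_{m-j} ξ` of its Taylor expansion at `t = 0`.
What is left is `t ^ m • R (ξ / t)`, where the remainder `R = a - ∑_{j < k} a_{m-j}` is a symbol of
order `m - k`. Functions of the form `t ^ c • G (ξ / t)`, extended by zero to `t ≤ 0`, are closed
under differentiation: each derivative lowers `c - order G` by at most one. Such a function is
`O(t ^ (c - order G))` as `t → 0`, so it is of class `C^N` up to `t = 0` once
`c - order G ≥ N + 2`, and `k = N + 2` terms give `b` the regularity `C^N`.
-/

lemma isOpen_setOf_lt_norm {E : Type*} [SeminormedAddCommGroup E] (r : ℝ) :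
    IsOpen {ξ : E | r < ‖ξ‖} :=
  isOpen_lt continuous_const continuous_norm

lemma isOpen_setOf_snd_lt_norm_fst {E : Type*} [SeminormedAddCommGroup E] :
    IsOpen {x : E × ℝ | x.2 < ‖x.1‖} :=
  isOpen_lt continuous_snd continuous_fst.norm

section

open Asymptotics Filter Topology
open scoped ContDiff

universe u

variable {E F : Type u} [NormedAddCommGroup E] [NormedSpace ℝ E]
  [NormedAddCommGroup F] [NormedSpace ℝ F]
  {G : E → F} {a : E → F} {σ : ℕ → E → F} {c m p M : ℝ} {x : E × ℝ}

/-- The homogenization `(ξ, t) ↦ t ^ c • G (ξ / t)` of degree `c` of a function `G`, which turns a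
symbol into a homogeneous function of one more variable. It is extended by zero to `t ≤ 0`. -/
noncomputable def homogenize (c : ℝ) (G : E → F) (x : E × ℝ) : F :=
  if 0 < x.2 then x.2 ^ c • G (x.2⁻¹ • x.1) else 0

/-- The derivative of `homogenize c G`, expressed through homogenizations of `G` and of its
derivative, so that smoothness of homogenizations can be proved by induction. -/
noncomputable def homogenizeFDeriv (c : ℝ) (G : E → F) (x : E × ℝ) : E × ℝ →L[ℝ] F :=
  (homogenize (c - 1) (fderiv ℝ G) x).comp (ContinuousLinearMap.fst ℝ E ℝ) +
    (ContinuousLinearMap.snd ℝ E ℝ).smulRight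
      (c • homogenize (c - 1) G x - homogenize (c - 2) (fderiv ℝ G) x x.1)

/-- Symbols of order `p`, considered only near infinity: smooth functions on `{ξ | 1 < ‖ξ‖}` whose
`i`-th derivative is `O(‖ξ‖ ^ (p - i))` there. -/
structure IsSymbolAtInfinity (p : ℝ) (G : E → F) : Prop where
  contDiffOn : ContDiffOn ℝ ∞ G {ξ | 1 < ‖ξ‖}
  bound : ∀ i : ℕ, ∃ M : ℝ, ∀ ξ, 1 < ‖ξ‖ → ‖iteratedFDeriv ℝ i G ξ‖ ≤ M * ‖ξ‖ ^ (p - i)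

/-- The remainder `a - ∑ j < k, σ j` of an asymptotic expansion of `a`. -/
def symbolRemainder (a : E → F) (σ : ℕ → E → F) (k : ℕ) (ξ : E) : F :=
  a ξ - ∑ j ∈ Finset.range k, σ j ξ

/-- `a` is a classical symbol of order `m` with asymptotic expansion `∑ j, σ j`, where `σ j` stands
for the component `a_{m-j}` of degree `m - j`. Regularity at the origin is not part of the
notion. -/
structure IsClassicalSymbol (m : ℝ) (a : E → F) (σ : ℕ → E → F) : Prop where
  contDiffOn : ContDiffOn ℝ ∞ a {ξ | ξ ≠ 0}
  contDiffOn_component : ∀ j, ContDiffOn ℝ ∞ (σ j) {ξ | ξ ≠ 0}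
  component_smul : ∀ j, ∀ t : ℝ, 0 < t → ∀ ξ, ξ ≠ 0 → σ j (t • ξ) = t ^ (m - j) • σ j ξ
  remainder_bound : ∀ k : ℕ, 1 ≤ k → ∀ i : ℕ, ∃ M : ℝ, ∀ ξ, 1 ≤ ‖ξ‖ →
    ‖iteratedFDerivWithin ℝ i (symbolRemainder a σ k) {ξ | 1 / 2 < ‖ξ‖} ξ‖ ≤
      M * ‖ξ‖ ^ (m - k - i)

lemma one_lt_norm_inv_smul {t : ℝ} {ξ : E} (ht : 0 < t) (htξ : t < ‖ξ‖) : 1 < ‖t⁻¹ • ξ‖ := by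
  rwa [norm_smul, norm_inv, Real.norm_of_nonneg ht.le, inv_mul_eq_div, one_lt_div ht]

lemma homogenize_of_pos (hx : 0 < x.2) :
    homogenize c G x = x.2 ^ c • G (x.2⁻¹ • x.1) :=
  if_pos hx

lemma homogenize_of_nonpos (hx : x.2 ≤ 0) : homogenize c G x = 0 :=
  if_neg hx.not_gt

lemma homogenizeFDeriv_of_nonpos (hx : x.2 ≤ 0) : homogenizeFDeriv c G x = 0 := by
  ext v <;> simp [homogenizeFDeriv, homogenize_of_nonpos hx]

lemma homogenize_eventuallyEq_of_pos (hx : 0 < x.2) :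
    homogenize c G =ᶠ[𝓝 x] fun y => y.2 ^ c • G (y.2⁻¹ • y.1) := by
  filter_upwards [continuousAt_snd.eventually_const_lt hx] with y hy using homogenize_of_pos hy

lemma homogenize_smul {r : ℝ} (hr : 0 < r) (x : E × ℝ) :
    homogenize c G (r • x) = r ^ c • homogenize c G x := by
  rcases le_or_gt x.2 0 with hx | hx
  · have hrx : (r • x).2 ≤ 0 := mul_nonpos_of_nonneg_of_nonpos hr.le hx
    rw [homogenize_of_nonpos hx, homogenize_of_nonpos hrx, smul_zero]
  · have hrx : 0 < (r • x).2 := mul_pos hr hx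
    rw [homogenize_of_pos hx, homogenize_of_pos hrx, Prod.smul_snd, Prod.smul_fst, smul_eq_mul,
      Real.mul_rpow hr.le hx.le, mul_inv_rev, smul_smul, smul_smul, inv_mul_cancel_right₀ hr.ne']

lemma contDiffAt_homogenize_of_pos {k : WithTop ℕ∞} (hx : 0 < x.2)
    (hG : ContDiffAt ℝ k G (x.2⁻¹ • x.1)) : ContDiffAt ℝ k (homogenize c G) x := by
  have hscale : ContDiffAt ℝ k (fun y : E × ℝ => y.2⁻¹ • y.1) x :=
    (contDiffAt_snd.inv hx.ne').smul contDiffAt_fst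
  exact ((contDiffAt_snd.rpow_const_of_ne hx.ne').smul (hG.comp x hscale)).congr_of_eventuallyEq
    (homogenize_eventuallyEq_of_pos hx)

lemma hasFDerivAt_homogenize_of_neg (hx : x.2 < 0) :
    HasFDerivAt (homogenize c G) (homogenizeFDeriv c G x) x := by
  rw [homogenizeFDeriv_of_nonpos hx.le]
  refine (hasFDerivAt_const (0 : F) x).congr_of_eventuallyEq ?_
  filter_upwards [continuousAt_snd.eventually_lt_const hx] with y hy
    using homogenize_of_nonpos hy.le

lemma hasFDerivAt_homogenize_of_pos (hx : 0 < x.2)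
    (hG : DifferentiableAt ℝ G (x.2⁻¹ • x.1)) :
    HasFDerivAt (homogenize c G) (homogenizeFDeriv c G x) x := by
  have hinv := (hasDerivAt_inv hx.ne').comp_hasFDerivAt x (hasFDerivAt_snd (𝕜 := ℝ) (E := E))
  have hpow := (Real.hasDerivAt_rpow_const (p := c) (.inl hx.ne')).comp_hasFDerivAt x
    (hasFDerivAt_snd (𝕜 := ℝ) (E := E))
  have hderiv := hpow.smul (hG.hasFDerivAt.comp x (hinv.smul hasFDerivAt_fst))
  refine (hderiv.congr_of_eventuallyEq (homogenize_eventuallyEq_of_pos hx)).congr_fderiv ?_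
  have hpow_one : x.2 ^ c * x.2⁻¹ = x.2 ^ (c - 1) := by
    rw [Real.rpow_sub_one hx.ne', div_eq_mul_inv]
  have hpow_two : x.2 ^ c * (x.2 ^ 2)⁻¹ = x.2 ^ (c - 2) := by
    rw [← Nat.cast_ofNat (R := ℝ), Real.rpow_sub_natCast hx.ne', div_eq_mul_inv]
  ext v
  · simp [homogenizeFDeriv, homogenize_of_pos hx, smul_smul, hpow_one]
  · simp [homogenizeFDeriv, homogenize_of_pos hx, smul_smul, hpow_two, neg_add_eq_sub]

lemma norm_homogenize_le (hM : ∀ ξ, 1 < ‖ξ‖ → ‖G ξ‖ ≤ M * ‖ξ‖ ^ p) (hx : 0 < x.2)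
    (hxU : x.2 < ‖x.1‖) : ‖homogenize c G x‖ ≤ M * ‖x.1‖ ^ p * x.2 ^ (c - p) := by
  rw [homogenize_of_pos hx, norm_smul, Real.norm_of_nonneg (Real.rpow_nonneg hx.le c)]
  calc x.2 ^ c * ‖G (x.2⁻¹ • x.1)‖
      ≤ x.2 ^ c * (M * ‖x.2⁻¹ • x.1‖ ^ p) := by
        gcongr
        exact hM _ (one_lt_norm_inv_smul hx hxU)
    _ = M * ‖x.1‖ ^ p * x.2 ^ (c - p) := by
        rw [norm_smul, norm_inv, Real.norm_of_nonneg hx.le,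
          Real.mul_rpow (inv_nonneg.2 hx.le) (norm_nonneg _), Real.inv_rpow hx.le,
          Real.rpow_sub hx]
        ring

lemma homogenize_isBigO_snd_sq (hcp : 2 ≤ c - p)
    (hM : ∀ ξ, 1 < ‖ξ‖ → ‖G ξ‖ ≤ M * ‖ξ‖ ^ p) (hx : x.2 = 0) (hx₁ : x.1 ≠ 0) :
    homogenize c G =O[𝓝 x] fun y => y.2 ^ 2 := by
  have hcont : ContinuousAt (fun y : E × ℝ => M * ‖y.1‖ ^ p) x :=
    continuousAt_const.mul (continuousAt_fst.norm.rpow_const (.inl (norm_ne_zero_iff.2 hx₁)))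
  obtain ⟨C, hC⟩ := exists_gt (M * ‖x.1‖ ^ p)
  have hxU : x.2 < ‖x.1‖ := hx ▸ norm_pos_iff.2 hx₁
  refine .of_bound (max C 0) ?_
  filter_upwards [hcont.eventually_lt_const hC, isOpen_setOf_snd_lt_norm_fst.mem_nhds hxU,
    continuousAt_snd.eventually_lt_const (hx.trans_lt one_pos)] with y hyC hyU hy_one
  rcases le_or_gt y.2 0 with hy | hy
  · rw [homogenize_of_nonpos hy, norm_zero]
    positivity
  · calc ‖homogenize c G y‖ ≤ M * ‖y.1‖ ^ p * y.2 ^ (c - p) := norm_homogenize_le hM hy hyU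
      _ ≤ max C 0 * y.2 ^ (2 : ℝ) :=
        mul_le_mul (hyC.le.trans (le_max_left _ _))
          (Real.rpow_le_rpow_of_exponent_ge hy hy_one.le hcp) (by positivity) (le_max_right _ _)
      _ = max C 0 * ‖y.2 ^ 2‖ := by
        rw [Real.rpow_two, Real.norm_of_nonneg (sq_nonneg _)]

lemma hasFDerivAt_homogenize_of_eq_zero (hcp : 2 ≤ c - p)
    (hM : ∀ ξ, 1 < ‖ξ‖ → ‖G ξ‖ ≤ M * ‖ξ‖ ^ p) (hx : x.2 = 0) (hx₁ : x.1 ≠ 0) :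
    HasFDerivAt (homogenize c G) (homogenizeFDeriv c G x) x := by
  rw [homogenizeFDeriv_of_nonpos hx.le]
  have hsnd : (fun y : E × ℝ => y.2) =O[𝓝 x] fun y => ‖y - x‖ :=
    .of_norm_le fun y => by simpa [hx] using norm_snd_le (y - x)
  exact ((homogenize_isBigO_snd_sq hcp hM hx hx₁).trans (hsnd.pow 2)).hasFDerivAt one_lt_two

namespace IsSymbolAtInfinity

protected lemma fderiv (hG : IsSymbolAtInfinity p G) :
    IsSymbolAtInfinity (p - 1) (fderiv ℝ G) where
  contDiffOn := hG.contDiffOn.fderiv_of_isOpen (isOpen_setOf_lt_norm 1) le_rfl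
  bound i := by
    obtain ⟨M, hM⟩ := hG.bound (i + 1)
    refine ⟨M, fun ξ hξ => ?_⟩
    rw [norm_iteratedFDeriv_fderiv, sub_sub, add_comm (1 : ℝ)]
    exact_mod_cast hM ξ hξ

lemma hasFDerivAt_homogenize (hG : IsSymbolAtInfinity p G) (hcp : 2 ≤ c - p)
    (hx : x.2 < ‖x.1‖) : HasFDerivAt (homogenize c G) (homogenizeFDeriv c G x) x := by
  rcases lt_trichotomy x.2 0 with ht | ht | ht
  · exact hasFDerivAt_homogenize_of_neg ht
  · obtain ⟨M, hM⟩ := hG.bound 0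
    simp only [norm_iteratedFDeriv_zero, Nat.cast_zero, sub_zero] at hM
    exact hasFDerivAt_homogenize_of_eq_zero hcp hM ht (norm_pos_iff.1 (ht ▸ hx))
  · have hmem : x.2⁻¹ • x.1 ∈ {ξ : E | 1 < ‖ξ‖} := one_lt_norm_inv_smul ht hx
    have hG_smooth : ContDiffAt ℝ ∞ G (x.2⁻¹ • x.1) :=
      hG.contDiffOn.contDiffAt ((isOpen_setOf_lt_norm 1).mem_nhds hmem)
    exact hasFDerivAt_homogenize_of_pos ht (hG_smooth.differentiableAt (by simp))

lemma contDiffOn_homogenize (hG : IsSymbolAtInfinity p G) {N : ℕ} (hcp : N + 2 ≤ c - p) :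
    ContDiffOn ℝ N (homogenize c G) {x | x.2 < ‖x.1‖} := by
  induction N generalizing F c p with
  | zero =>
    rw [Nat.cast_zero, contDiffOn_zero]
    exact fun x hx =>
      (hG.hasFDerivAt_homogenize (by simpa using hcp) hx).continuousAt.continuousWithinAt
  | succ N ih =>
    push_cast at hcp
    have hderiv : ∀ x ∈ {x : E × ℝ | x.2 < ‖x.1‖},
        HasFDerivAt (homogenize c G) (homogenizeFDeriv c G x) x :=
      fun x hx => hG.hasFDerivAt_homogenize (by linarith [N.cast_nonneg (α := ℝ)]) hx
    rw [Nat.cast_succ, contDiffOn_succ_iff_fderiv_of_isOpen isOpen_setOf_snd_lt_norm_fst]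
    refine ⟨fun x hx => (hderiv x hx).differentiableAt.differentiableWithinAt, by simp, ?_⟩
    refine ContDiffOn.congr ?_ fun x hx => (hderiv x hx).fderiv
    have hξ : ContDiffOn ℝ N (homogenize (c - 1) (fderiv ℝ G)) {x | x.2 < ‖x.1‖} :=
      ih hG.fderiv (by linarith)
    have ht : ContDiffOn ℝ N (homogenize (c - 1) G) {x | x.2 < ‖x.1‖} := ih hG (by linarith)
    have htξ : ContDiffOn ℝ N (homogenize (c - 2) (fderiv ℝ G)) {x | x.2 < ‖x.1‖} :=
      ih hG.fderiv (by linarith)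
    exact (hξ.clm_comp contDiffOn_const).add
      (contDiffOn_const.smulRight ((ht.const_smul c).sub (htξ.clm_apply contDiffOn_fst)))

end IsSymbolAtInfinity

namespace IsClassicalSymbol

lemma contDiffOn_remainder (ha : IsClassicalSymbol m a σ) (k : ℕ) :
    ContDiffOn ℝ ∞ (symbolRemainder a σ k) {ξ | ξ ≠ 0} :=
  ha.contDiffOn.sub (.sum fun j _ => ha.contDiffOn_component j)

lemma isSymbolAtInfinity_remainder (ha : IsClassicalSymbol m a σ) {k : ℕ} (hk : 1 ≤ k) :
    IsSymbolAtInfinity (m - k) (symbolRemainder a σ k) where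
  contDiffOn := (ha.contDiffOn_remainder k).mono fun _ hξ =>
    norm_pos_iff.1 (one_pos.trans hξ)
  bound i := by
    obtain ⟨M, hM⟩ := ha.remainder_bound k hk i
    refine ⟨M, fun ξ hξ => ?_⟩
    rw [← iteratedFDerivWithin_of_isOpen i (isOpen_setOf_lt_norm (1 / 2))
      (one_half_lt_one.trans hξ)]
    exact hM ξ hξ.le

lemma contDiffAt_homogenize_remainder (ha : IsClassicalSymbol m a σ) (N : ℕ) (hx₁ : x.1 ≠ 0)
    (hx : 0 ≤ x.2) :
    ContDiffAt ℝ N (homogenize m (symbolRemainder a σ (N + 2))) x := by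
  rcases hx.eq_or_lt' with ht | ht
  · have hxU : x ∈ {x : E × ℝ | x.2 < ‖x.1‖} := ht.trans_lt (norm_pos_iff.2 hx₁)
    exact ((ha.isSymbolAtInfinity_remainder (by simp)).contDiffOn_homogenize
      (by push_cast; linarith)).contDiffAt (isOpen_setOf_snd_lt_norm_fst.mem_nhds hxU)
  · have hmem : x.2⁻¹ • x.1 ≠ 0 := smul_ne_zero (inv_ne_zero ht.ne') hx₁
    exact contDiffAt_homogenize_of_pos ht
      (((ha.contDiffOn_remainder _).contDiffAt (isOpen_ne.mem_nhds hmem)).of_le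
        (mod_cast le_top))

lemma contDiffAt_taylorSum (ha : IsClassicalSymbol m a σ) (k : ℕ) (hx₁ : x.1 ≠ 0) :
    ContDiffAt ℝ ∞ (fun y : E × ℝ => ∑ j ∈ Finset.range k, y.2 ^ j • σ j y.1) x :=
  .sum fun j _ => (contDiffAt_snd.pow j).smul
    (((ha.contDiffOn_component j).contDiffAt (isOpen_ne.mem_nhds hx₁)).comp x contDiffAt_fst)

lemma rpow_smul_component_inv_smul (ha : IsClassicalSymbol m a σ) (j : ℕ) {t : ℝ} {ξ : E}
    (ht : 0 < t) (hξ : ξ ≠ 0) : t ^ m • σ j (t⁻¹ • ξ) = t ^ j • σ j ξ := by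
  rw [ha.component_smul j t⁻¹ (inv_pos.2 ht) ξ hξ, smul_smul, Real.inv_rpow ht.le,
    ← Real.rpow_neg ht.le, ← Real.rpow_add ht, neg_sub, add_sub_cancel, Real.rpow_natCast]

lemma homogenize_eq_taylorSum_add (ha : IsClassicalSymbol m a σ) (k : ℕ) (hx₁ : x.1 ≠ 0)
    (hx : 0 < x.2) :
    homogenize m a x = ∑ j ∈ Finset.range k, x.2 ^ j • σ j x.1 +
      homogenize m (symbolRemainder a σ k) x := by
  simp only [homogenize_of_pos hx, symbolRemainder, smul_sub, Finset.smul_sum,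
    ha.rpow_smul_component_inv_smul _ hx hx₁, add_sub_cancel]

end IsClassicalSymbol

theorem stmt3_general (ha : IsClassicalSymbol m a σ) {b : E × ℝ → F}
    (hb_pos : ∀ ξ t, 0 < t → b (ξ, t) = t ^ m • a (t⁻¹ • ξ))
    (hb_zero : ∀ ξ, ξ ≠ 0 → b (ξ, 0) = σ 0 ξ) :
    ContDiffOn ℝ ∞ b ({ξ | ξ ≠ 0} ×ˢ Ici 0) ∧
    ∀ r : ℝ, 0 < r → ∀ ξ, ξ ≠ 0 → ∀ t : ℝ, 0 ≤ t → b (r • ξ, r * t) = r ^ m • b (ξ, t) := by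
  have hb_homogenize : ∀ ξ t, 0 < t → b (ξ, t) = homogenize m a (ξ, t) := fun ξ t ht => by
    rw [hb_pos ξ t ht, homogenize_of_pos ht]
  refine ⟨contDiffOn_infty.2 fun N => ?_, fun r hr ξ hξ t ht => ?_⟩
  · have htaylor : ∀ y ∈ {ξ : E | ξ ≠ 0} ×ˢ Ici (0 : ℝ),
        b y = ∑ j ∈ Finset.range (N + 2), y.2 ^ j • σ j y.1 +
          homogenize m (symbolRemainder a σ (N + 2)) y := by
      rintro ⟨ξ, t⟩ ⟨hξ, ht⟩
      rcases (mem_Ici.1 ht).eq_or_lt with rfl | ht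
      · simp [hb_zero ξ hξ, homogenize_of_nonpos, Finset.sum_range_succ']
      · rw [hb_homogenize ξ t ht, ha.homogenize_eq_taylorSum_add (N + 2) hξ ht]
    refine ContDiffOn.congr (fun y hy => ContDiffAt.contDiffWithinAt ?_) htaylor
    exact ((ha.contDiffAt_taylorSum (N + 2) hy.1).of_le (mod_cast le_top)).add
      (ha.contDiffAt_homogenize_remainder N hy.1 hy.2)
  · rcases ht.eq_or_lt with rfl | ht
    · rw [mul_zero, hb_zero _ (smul_ne_zero hr.ne' hξ), hb_zero _ hξ, ha.component_smul 0 r hr ξ hξ,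
        Nat.cast_zero, sub_zero]
    · rw [hb_homogenize _ _ (mul_pos hr ht), hb_homogenize _ _ ht]
      exact homogenize_smul hr (ξ, t)

end

/-- A classical symbol `a` of integer order `m`, with asymptotic expansion
`a ∼ ∑ⱼ a_{m-j}`, gives rise to a function `b (ξ, t) = t^m a (ξ / t)` (for `t > 0`),
`b (ξ, 0) = aₘ ξ` (for `ξ ≠ 0`), `b = 0` elsewhere, which is smooth on
`(ℝⁿ \ {0}) × [0, ∞)` and homogeneous: `b (λ ξ, λ t) = λ^m b (ξ, t)`. -/
theorem stmt3 (n : ℕ) (hn : 1 ≤ n) (m : ℤ)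
    (a : EuclideanSpace ℝ (Fin n) → ℂ) (ha : ContDiff ℝ (⊤ : ℕ∞) a)
    (asym : ℕ → EuclideanSpace ℝ (Fin n) → ℂ)
    (hasym_smooth : ∀ j : ℕ, ContDiffOn ℝ (⊤ : ℕ∞) (asym j) {ξ | ξ ≠ 0})
    (hasym_hom : ∀ j : ℕ, ∀ t : ℝ, 0 < t → ∀ ξ : EuclideanSpace ℝ (Fin n), ξ ≠ 0 →
      asym j (t • ξ) = (t ^ ((m : ℝ) - j) : ℝ) • asym j ξ)
    (hbound : ∀ k : ℕ, 1 ≤ k → ∀ i : ℕ, ∃ M : ℝ,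
      ∀ ξ : EuclideanSpace ℝ (Fin n), 1 ≤ ‖ξ‖ →
        ‖iteratedFDerivWithin ℝ i (fun ξ => a ξ - ∑ j ∈ Finset.range k, asym j ξ)
            {ξ : EuclideanSpace ℝ (Fin n) | 1 / 2 < ‖ξ‖} ξ‖ ≤
          M * ‖ξ‖ ^ ((m : ℝ) - k - i))
    (b : EuclideanSpace ℝ (Fin n) × ℝ → ℂ)
    (hb_pos : ∀ (ξ : EuclideanSpace ℝ (Fin n)) (t : ℝ), 0 < t →
      b (ξ, t) = (t ^ m : ℝ) • a (t⁻¹ • ξ))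
    (hb_zero : ∀ ξ : EuclideanSpace ℝ (Fin n), ξ ≠ 0 → b (ξ, 0) = asym 0 ξ)
    (hb_neg : ∀ (ξ : EuclideanSpace ℝ (Fin n)) (t : ℝ), t < 0 → b (ξ, t) = 0)
    (hb_origin : b (0, 0) = 0) :
    ContDiffOn ℝ (⊤ : ℕ∞) b ({ξ : EuclideanSpace ℝ (Fin n) | ξ ≠ 0} ×ˢ Ici (0 : ℝ)) ∧
    (∀ lam : ℝ, 0 < lam → ∀ ξ : EuclideanSpace ℝ (Fin n), ξ ≠ 0 → ∀ t : ℝ, 0 ≤ t →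
      b (lam • ξ, lam * t) = (lam ^ m : ℝ) • b (ξ, t)) := by
  simp only [← Real.rpow_intCast] at hb_pos ⊢
  exact stmt3_general ⟨ha.contDiffOn, hasym_smooth, hasym_hom, hbound⟩ hb_pos hb_zero
end

section
/- Let p ≥ 1 and let a : ℝᵖ → ℂ be a bounded function that is continuous on ℝᵖ∖{0} and positively homogeneous of degree 0, i.e. a(t·η) = a(η) for all t > 0 and η ≠ 0. Let ξ ∈ ℝᵖ with ξ ≠ 0. Then the limit as n → ∞ (n ranging over positive natural numbers) of ∫_{ℝᵖ} a(η) · n^{−p/2} · exp(−π·‖η − n·ξ‖²/n) dη exists and equals a(ξ). -/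
open MeasureTheory Filter Topology

/-! Substituting `η = √t • u + t • ξ` turns the integral of `a` against the Gaussian density of
scale `√t` centred at `t • ξ` into that of `u ↦ a (√t • u + t • ξ)` against the fixed weight
`exp (-π ‖u‖ ^ 2)`. Since `a` is invariant under positive dilations,
`a (√t • u + t • ξ) = a ((√t)⁻¹ • u + ξ)`, which tends to `a ξ` by continuity at `ξ`; boundedness
of `a` lets dominated convergence conclude. -/

theorem tendsto_integral_smul_comp_of_continuousAt {ι Ω X E 𝕜 : Type*} [MeasurableSpace Ω]
    {μ : Measure Ω} [TopologicalSpace X] [MeasurableSpace X] [RCLike 𝕜] [NormedAddCommGroup E]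
    [NormedSpace ℝ E] [NormedSpace 𝕜 E] [CompleteSpace E] {l : Filter ι} [l.IsCountablyGenerated]
    {w : Ω → 𝕜} (hw : Integrable w μ) {f : X → E} (hf : StronglyMeasurable f)
    {C : ℝ} (hC : ∀ x, ‖f x‖ ≤ C) {x₀ : X} (hx₀ : ContinuousAt f x₀)
    {T : ι → Ω → X} (hTm : ∀ i, Measurable (T i))
    (hT : ∀ᵐ ω ∂μ, Tendsto (fun i ↦ T i ω) l (𝓝 x₀)) :
    Tendsto (fun i ↦ ∫ ω, w ω • f (T i ω) ∂μ) l (𝓝 ((∫ ω, w ω ∂μ) • f x₀)) := by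
  rw [← integral_smul_const]
  refine tendsto_integral_filter_of_dominated_convergence (fun ω ↦ ‖w ω‖ * C)
    (.of_forall fun i ↦ hw.aestronglyMeasurable.smul
      (hf.comp_measurable (hTm i)).aestronglyMeasurable)
    (.of_forall fun i ↦ .of_forall fun ω ↦ ?_) (hw.norm.mul_const C) ?_
  · rw [norm_smul]
    gcongr
    exact hC _
  · filter_upwards [hT] with ω hω
    exact (hx₀.tendsto.comp hω).const_smul (w ω)

section GaussianDensity

variable {V E : Type*} [NormedAddCommGroup V] [InnerProductSpace ℝ V] [NormedAddCommGroup E]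
  [NormedSpace ℝ E]

/-- The density at `η` of the Gaussian probability measure on `V` with centre `v` and scale `√t`,
normalised as in Fourier analysis: the covariance is `t / (2 * π)` times the identity. For
`v = n • ξ` and `t = n` it is the squared modulus of the Fourier transform of the `n`-th coherent
state. Only `0 < t` is meaningful. -/
noncomputable def gaussianDensity (t : ℝ) (v η : V) : ℝ :=
  t ^ (-(Module.finrank ℝ V : ℝ) / 2) * Real.exp (-Real.pi * ‖η - v‖ ^ 2 / t)

theorem gaussianDensity_sqrt_smul_add {t : ℝ} (ht : 0 < t) (v u : V) :
    gaussianDensity t v (√t • u + v) =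
      (√t ^ Module.finrank ℝ V)⁻¹ * Real.exp (-Real.pi * ‖u‖ ^ 2) := by
  have hnorm : ‖√t • u + v - v‖ ^ 2 = t * ‖u‖ ^ 2 := by
    rw [add_sub_cancel_right, norm_smul, mul_pow, Real.norm_eq_abs, sq_abs, Real.sq_sqrt ht.le]
  have hexponent : -Real.pi * (t * ‖u‖ ^ 2) / t = -Real.pi * ‖u‖ ^ 2 := by field_simp
  rw [gaussianDensity, hnorm, hexponent, neg_div, Real.rpow_neg ht.le,
    Real.rpow_div_two_eq_sqrt _ ht.le, Real.rpow_natCast]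

variable [FiniteDimensional ℝ V] [MeasurableSpace V] [BorelSpace V]

theorem integral_exp_neg_pi_mul_sq_norm : ∫ u : V, Real.exp (-Real.pi * ‖u‖ ^ 2) = 1 := by
  rw [GaussianFourier.integral_rexp_neg_mul_sq_norm Real.pi_pos, div_self Real.pi_ne_zero,
    Real.one_rpow]

theorem integrable_exp_neg_pi_mul_sq_norm :
    Integrable fun u : V ↦ Real.exp (-Real.pi * ‖u‖ ^ 2) :=
  .of_integral_ne_zero (integral_exp_neg_pi_mul_sq_norm.trans_ne one_ne_zero)

theorem integral_gaussianDensity_smul {t : ℝ} (ht : 0 < t) (v : V) (f : V → E) :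
    ∫ η, gaussianDensity t v η • f η =
      ∫ u : V, Real.exp (-Real.pi * ‖u‖ ^ 2) • f (√t • u + v) := by
  have hjac : √t ^ Module.finrank ℝ V ≠ 0 := (pow_pos (Real.sqrt_pos.2 ht) _).ne'
  calc ∫ η, gaussianDensity t v η • f η
      = ∫ η, gaussianDensity t v (η + v) • f (η + v) :=
        (integral_add_right_eq_self (fun η ↦ gaussianDensity t v η • f η) v).symm
    _ = √t ^ Module.finrank ℝ V • ∫ u, gaussianDensity t v (√t • u + v) • f (√t • u + v) := by
        rw [Measure.integral_comp_smul_of_nonneg volume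
          (fun η ↦ gaussianDensity t v (η + v) • f (η + v)) √t (hR := Real.sqrt_nonneg t),
          smul_inv_smul₀ hjac]
    _ = ∫ u : V, Real.exp (-Real.pi * ‖u‖ ^ 2) • f (√t • u + v) := by
        simp only [← integral_smul, gaussianDensity_sqrt_smul_add ht, smul_smul,
          mul_inv_cancel_left₀ hjac]

theorem stmt9_general [CompleteSpace E] {a : V → E} (hbdd : ∃ C : ℝ, ∀ η, ‖a η‖ ≤ C)
    (hmeas : StronglyMeasurable a) (hhom : ∀ t : ℝ, 0 < t → ∀ η, η ≠ 0 → a (t • η) = a η)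
    {ξ : V} (hξ : ContinuousAt a ξ) :
    Tendsto (fun t : ℝ ↦ ∫ η, gaussianDensity t (t • ξ) η • a η) atTop (𝓝 (a ξ)) := by
  obtain ⟨C, hC⟩ := hbdd
  have hinv {t : ℝ} (ht : 0 < t) (η : V) : a (t • η) = a η := by
    rcases eq_or_ne η 0 with rfl | hη
    · rw [smul_zero]
    · exact hhom t ht η hη
  have hdilate {t : ℝ} (ht : 0 < t) (u : V) : a (√t • u + t • ξ) = a ((√t)⁻¹ • u + ξ) := by
    rw [← hinv ht ((√t)⁻¹ • u + ξ), smul_add, smul_smul, ← div_eq_mul_inv, Real.div_sqrt]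
  have hpoint (u : V) : Tendsto (fun t : ℝ ↦ (√t)⁻¹ • u + ξ) atTop (𝓝 ξ) := by
    simpa only [Pi.inv_apply, zero_smul, zero_add] using
      (Real.tendsto_sqrt_atTop.inv_tendsto_atTop.smul_const u).add_const ξ
  have hlim := tendsto_integral_smul_comp_of_continuousAt
    integrable_exp_neg_pi_mul_sq_norm hmeas hC hξ (fun t ↦ by fun_prop) (.of_forall hpoint)
  rw [integral_exp_neg_pi_mul_sq_norm, one_smul] at hlim
  refine hlim.congr' ?_
  filter_upwards [eventually_gt_atTop 0] with t ht
  simp only [integral_gaussianDensity_smul ht, hdilate ht]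

end GaussianDensity

/-- The Gaussian probability densities `η ↦ n^{-p/2} exp (-π ‖η - n ξ‖² / n)`
concentrate along the direction of `ξ`: for a bounded function `a`, continuous away
from `0` and positively homogeneous of degree `0`, the integrals
`∫ a (η) n^{-p/2} exp (-π ‖η - n ξ‖² / n) dη` tend to `a (ξ)` as `n → ∞`. -/
theorem stmt9 (p : ℕ) (hp : 1 ≤ p) (a : EuclideanSpace ℝ (Fin p) → ℂ)
    (hbdd : ∃ C : ℝ, ∀ η : EuclideanSpace ℝ (Fin p), ‖a η‖ ≤ C)
    (hcont : ContinuousOn a {η : EuclideanSpace ℝ (Fin p) | η ≠ 0})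
    (hhom : ∀ t : ℝ, 0 < t → ∀ η : EuclideanSpace ℝ (Fin p), η ≠ 0 → a (t • η) = a η)
    (ξ : EuclideanSpace ℝ (Fin p)) (hξ : ξ ≠ 0) :
    Tendsto (fun n : ℕ =>
      ∫ η : EuclideanSpace ℝ (Fin p),
        a η * ((((n : ℝ) ^ (-(p : ℝ) / 2) *
          Real.exp (-Real.pi * ‖η - (n : ℝ) • ξ‖ ^ 2 / n) : ℝ)) : ℂ))
      atTop (𝓝 (a ξ)) := by
  simpa only [gaussianDensity, finrank_euclideanSpace_fin, Complex.real_smul, mul_comm (a _),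
    Function.comp_def] using
    (stmt9_general hbdd (measurable_of_continuousOn_compl_singleton 0 hcont).stronglyMeasurable
      hhom (hcont.continuousAt (isOpen_ne.mem_nhds hξ))).comp tendsto_natCast_atTop_atTop
end

section
/- Let n ≥ 1, m ∈ ℝ, and let a : ℝⁿ → ℂ be C^∞ such that for every i ∈ ℕ there is a constant C_i with ‖D^i a(ξ)‖ ≤ C_i·(1 + ‖ξ‖)^{m−i} for all ξ ∈ ℝⁿ, where D^i a denotes the i-th iterated Fréchet derivative. Then there exists a function κ : ℝⁿ → ℂ which is C^∞ on ℝⁿ∖{0}, such that for every C^∞ compactly supported function f : ℝⁿ → ℂ whose support is contained in ℝⁿ∖{0}, the function ξ ↦ a(ξ)·𝓕f(ξ) is integrable and ∫_{ℝⁿ} a(ξ)·𝓕f(ξ) dξ = ∫_{ℝⁿ} κ(x)·f(x) dx. -/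
open MeasureTheory FourierTransform

/-!
Away from the origin `𝓕 a` can be recovered from `𝓕 (Δ a)`, because the Fourier transform turns the
Laplacian into multiplication by `-(2π‖x‖)²`, which does not vanish there. Each Laplacian lowers
the order of the symbol `a` by two; as soon as the order is below `-(dim E + k)`, the moments of `a`
up to order `k` are integrable and `𝓕 a` is an honest function of class `C^k`. So for every `k`,
dividing by a power of `-(2π‖x‖)²` gives a `C^k` kernel of `P_a` off the origin. A continuous kernel
is determined by the distribution, so all these kernels agree, and their common value is smooth.
-/

open Module SchwartzMap
open scoped ContDiff Laplacian LineDeriv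

section TemperateGrowth

variable {E F : Type*} [NormedAddCommGroup E] [NormedSpace ℝ E]
  [NormedAddCommGroup F] [NormedSpace ℝ F] {a : E → F}

theorem hasTemperateGrowth_fderiv (ha : a.HasTemperateGrowth) :
    (fderiv ℝ a).HasTemperateGrowth := by
  refine ⟨ha.1.fderiv_right (by simp), fun i => ?_⟩
  simpa only [norm_iteratedFDeriv_fderiv] using ha.2 (i + 1)

theorem hasTemperateGrowth_fderiv_apply (ha : a.HasTemperateGrowth) (v : E) :
    (fun x => fderiv ℝ a x v).HasTemperateGrowth :=
  (ContinuousLinearMap.apply ℝ F v).hasTemperateGrowth.comp (hasTemperateGrowth_fderiv ha)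

end TemperateGrowth

section Laplacian

variable {E F ι : Type*} [NormedAddCommGroup E] [InnerProductSpace ℝ E] [FiniteDimensional ℝ E]
  [NormedAddCommGroup F] [NormedSpace ℝ F] [Fintype ι] (b : OrthonormalBasis ι ℝ E)

theorem laplacian_eq_sum_fderiv_fderiv (a : E → F) :
    Δ a = fun x => ∑ i, fderiv ℝ (fderiv ℝ a) x (b i) (b i) := by
  simp [InnerProductSpace.laplacian_eq_iteratedFDeriv_orthonormalBasis a b,
    iteratedFDeriv_two_apply]

theorem laplacian_eq_sum_fderiv_fderiv_apply {a : E → F} (ha : ContDiff ℝ 2 a) :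
    Δ a = fun x => ∑ i, fderiv ℝ (fun y => fderiv ℝ a y (b i)) x (b i) := by
  have hda : Differentiable ℝ (fderiv ℝ a) :=
    (ha.fderiv_right (m := 1) (by norm_num)).differentiable (by simp)
  rw [laplacian_eq_sum_fderiv_fderiv b]
  ext x
  refine Finset.sum_congr rfl fun i _ => ?_
  simp [fderiv_clm_apply (hda x) (differentiableAt_const _)]

end Laplacian

section Symbol

variable {E F G : Type*} [NormedAddCommGroup E] [NormedSpace ℝ E]
  [NormedAddCommGroup F] [NormedSpace ℝ F] [NormedAddCommGroup G] [NormedSpace ℝ G]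

/-- `a` is a symbol of order `m` on `E`, i.e. a member of Hörmander's class `S^m` of symbols without
base variables: every derivative gains one power of decay. -/
structure IsSymbol (m : ℝ) (a : E → F) : Prop where
  contDiff : ContDiff ℝ ∞ a
  exists_bound : ∀ i : ℕ, ∃ C : ℝ, ∀ ξ : E, ‖iteratedFDeriv ℝ i a ξ‖ ≤ C * (1 + ‖ξ‖) ^ (m - i)

namespace IsSymbol

variable {m : ℝ} {a : E → F}

theorem fderiv (ha : IsSymbol m a) : IsSymbol (m - 1) (fderiv ℝ a) where
  contDiff := ha.contDiff.fderiv_right (by simp)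
  exists_bound i := by
    obtain ⟨C, hC⟩ := ha.exists_bound (i + 1)
    refine ⟨C, fun ξ => ?_⟩
    rw [norm_iteratedFDeriv_fderiv, show m - 1 - i = m - (i + 1 : ℕ) by push_cast; ring]
    exact hC ξ

theorem clm_comp (L : F →L[ℝ] G) (ha : IsSymbol m a) : IsSymbol m (L ∘ a) where
  contDiff := L.contDiff.comp ha.contDiff
  exists_bound i := by
    obtain ⟨C, hC⟩ := ha.exists_bound i
    refine ⟨‖L‖ * C, fun ξ => ?_⟩
    calc ‖iteratedFDeriv ℝ i (L ∘ a) ξ‖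
        ≤ ‖L‖ * ‖iteratedFDeriv ℝ i a ξ‖ :=
          L.norm_iteratedFDeriv_comp_left ha.contDiff.contDiffAt (by exact_mod_cast le_top)
      _ ≤ ‖L‖ * (C * (1 + ‖ξ‖) ^ (m - i)) := by gcongr; exact hC ξ
      _ = ‖L‖ * C * (1 + ‖ξ‖) ^ (m - i) := by ring

theorem hasTemperateGrowth (ha : IsSymbol m a) : a.HasTemperateGrowth := by
  refine ⟨ha.contDiff, fun i => ?_⟩
  obtain ⟨C, hC⟩ := ha.exists_bound i
  obtain ⟨k, hk⟩ := exists_nat_ge m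
  refine ⟨k, |C|, fun ξ => ?_⟩
  calc ‖iteratedFDeriv ℝ i a ξ‖
      ≤ C * (1 + ‖ξ‖) ^ (m - i) := hC ξ
    _ ≤ |C| * (1 + ‖ξ‖) ^ (k : ℝ) := by
        gcongr
        · exact le_abs_self C
        · linarith [norm_nonneg ξ]
        · linarith [i.cast_nonneg (α := ℝ)]
    _ = |C| * (1 + ‖ξ‖) ^ k := by rw [Real.rpow_natCast]

theorem integrable_pow_norm_mul_norm [FiniteDimensional ℝ E] [MeasurableSpace E] [BorelSpace E]
    {μ : Measure E} [μ.IsAddHaarMeasure] (ha : IsSymbol m a) {k : ℕ}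
    (hmk : m + k < -finrank ℝ E) : Integrable (fun ξ => ‖ξ‖ ^ k * ‖a ξ‖) μ := by
  obtain ⟨C, hC⟩ := ha.exists_bound 0
  have hdom : Integrable (fun ξ : E => C * (1 + ‖ξ‖) ^ (m + k)) μ := by
    simpa using (integrable_one_add_norm (r := -(m + k)) (by linarith)).const_mul C
  have hcont : Continuous fun ξ => ‖ξ‖ ^ k * ‖a ξ‖ := by
    have := ha.contDiff.continuous
    fun_prop
  refine hdom.mono' hcont.aestronglyMeasurable (.of_forall fun ξ => ?_)
  have hξ : ‖a ξ‖ ≤ C * (1 + ‖ξ‖) ^ m := by simpa using hC ξ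
  calc ‖‖ξ‖ ^ k * ‖a ξ‖‖
      = ‖ξ‖ ^ k * ‖a ξ‖ := Real.norm_of_nonneg (by positivity)
    _ ≤ (1 + ‖ξ‖) ^ k * (C * (1 + ‖ξ‖) ^ m) := by gcongr; linarith
    _ = C * (1 + ‖ξ‖) ^ (m + k) := by
        rw [Real.rpow_add (by positivity), Real.rpow_natCast]
        ring

theorem laplacian {E : Type*} [NormedAddCommGroup E] [InnerProductSpace ℝ E]
    [FiniteDimensional ℝ E] {a : E → F} (ha : IsSymbol m a) : IsSymbol (m - 2) (Δ a) := by
  let b := stdOrthonormalBasis ℝ E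
  let trace : (E →L[ℝ] E →L[ℝ] F) →L[ℝ] F := ∑ i,
    ContinuousLinearMap.apply ℝ F (b i) ∘L ContinuousLinearMap.apply ℝ (E →L[ℝ] F) (b i)
  have hΔ : Δ a = trace ∘ _root_.fderiv ℝ (_root_.fderiv ℝ a) := by
    ext x
    simp [trace, laplacian_eq_sum_fderiv_fderiv b]
  rw [hΔ, show m - 2 = m - 1 - 1 by ring]
  exact ha.fderiv.fderiv.clm_comp trace

end IsSymbol

end Symbol

section Cutoff

theorem contDiff_mul_of_tsupport_subset {𝕜 E A : Type*} [NontriviallyNormedField 𝕜]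
    [NormedAddCommGroup E] [NormedSpace 𝕜 E] [NormedRing A] [NormedAlgebra 𝕜 A] {n : ℕ∞ω}
    {f g : E → A} {U : Set E} (hU : IsOpen U) (hg : ContDiffOn 𝕜 n g U) (hf : ContDiff 𝕜 n f)
    (hfU : tsupport f ⊆ U) : ContDiff 𝕜 n (g * f) := by
  rw [contDiff_iff_contDiffAt]
  intro x
  by_cases hx : x ∈ tsupport f
  · exact (hg.contDiffAt (hU.mem_nhds (hfU hx))).mul hf.contDiffAt
  · refine (contDiffAt_const (c := (0 : A))).congr_of_eventuallyEq ?_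
    filter_upwards [notMem_tsupport_iff_eventuallyEq.1 hx] with y hy
    simp [hy]

theorem integrable_smul_of_tsupport_subset {X 𝕜 F : Type*} [TopologicalSpace X]
    [MeasurableSpace X] [OpensMeasurableSpace X] {μ : Measure X} [IsFiniteMeasureOnCompacts μ]
    [NormedField 𝕜] [NormedAddCommGroup F] [NormedSpace 𝕜 F] {κ : X → F} {f : X → 𝕜} {U : Set X}
    (hU : IsOpen U) (hκ : ContinuousOn κ U) (hf : Continuous f) (hfc : HasCompactSupport f)
    (hfU : tsupport f ⊆ U) : Integrable (fun x => f x • κ x) μ := by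
  have hcont : Continuous (fun x => f x • κ x) :=
    (hf.continuousOn.smul hκ).continuous_of_tsupport_subset hU
      ((tsupport_smul_subset_left f κ).trans hfU)
  exact hcont.integrable_of_hasCompactSupport hfc.smul_right

end Cutoff

section Representation

variable {E F : Type*} [NormedAddCommGroup E] [NormedSpace ℝ E]
  [NormedAddCommGroup F] [NormedSpace ℂ F] [MeasurableSpace E]

/-- The tempered distribution `T` is given on `U` by integration against the function `κ`. Only
compactly supported test functions are used, so that any `κ` continuous on an open set `U` can
occur, whatever its growth at infinity and at the boundary of `U`. -/
def IsRepresentedOn (T : 𝓢'(E, F)) (κ : E → F) (U : Set E) (μ : Measure E := by volume_tac) :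
    Prop :=
  ∀ f : 𝓢(E, ℂ), HasCompactSupport f → tsupport f ⊆ U → T f = ∫ x, f x • κ x ∂μ

namespace IsRepresentedOn

variable {T : 𝓢'(E, F)} {κ κ₁ κ₂ : E → F} {U : Set E} {μ : Measure E}

theorem eqOn [FiniteDimensional ℝ E] [BorelSpace E] [IsLocallyFiniteMeasure μ]
    [μ.IsOpenPosMeasure] [CompleteSpace F] (hU : IsOpen U) (h₁ : IsRepresentedOn T κ₁ U μ)
    (h₂ : IsRepresentedOn T κ₂ U μ) (hκ₁ : ContinuousOn κ₁ U) (hκ₂ : ContinuousOn κ₂ U) :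
    Set.EqOn κ₁ κ₂ U := by
  have hloc : LocallyIntegrableOn (κ₁ - κ₂) U μ :=
    (hκ₁.sub hκ₂).locallyIntegrableOn hU.measurableSet
  have hzero : ∀ᵐ x ∂μ, x ∈ U → (κ₁ - κ₂) x = 0 := by
    refine hU.ae_eq_zero_of_integral_contDiff_smul_eq_zero hloc fun g hg hgc hgU => ?_
    let f : E → ℂ := fun x => g x
    have hf : ContDiff ℝ ∞ f := Complex.ofRealCLM.contDiff.comp hg
    have hfc : HasCompactSupport f := hgc.comp_left Complex.ofReal_zero
    have hfU : tsupport f ⊆ U := (closure_mono fun x => by simp [f]).trans hgU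
    calc ∫ x, g x • (κ₁ - κ₂) x ∂μ
        = ∫ x, (f x • κ₁ x - f x • κ₂ x) ∂μ := by simp [f, smul_sub]
      _ = ∫ x, f x • κ₁ x ∂μ - ∫ x, f x • κ₂ x ∂μ :=
          integral_sub (integrable_smul_of_tsupport_subset hU hκ₁ hf.continuous hfc hfU)
            (integrable_smul_of_tsupport_subset hU hκ₂ hf.continuous hfc hfU)
      _ = 0 := by
          have h := h₁ (hfc.toSchwartzMap hf) hfc hfU
          rw [h₂ (hfc.toSchwartzMap hf) hfc hfU] at h
          exact sub_eq_zero.2 h.symm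
  refine Measure.eqOn_open_of_ae_eq (μ := μ) ?_ hU hκ₁ hκ₂
  filter_upwards [(ae_restrict_iff' hU.measurableSet).2 hzero] with x hx using sub_eq_zero.1 hx

theorem exists_contDiffOn_infty [FiniteDimensional ℝ E] [BorelSpace E] [IsLocallyFiniteMeasure μ]
    [μ.IsOpenPosMeasure] [CompleteSpace F] (hU : IsOpen U)
    (h : ∀ k : ℕ, ∃ κ, ContDiffOn ℝ k κ U ∧ IsRepresentedOn T κ U μ) :
    ∃ κ, ContDiffOn ℝ ∞ κ U ∧ IsRepresentedOn T κ U μ := by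
  choose κ hκ hT using h
  refine ⟨κ 0, contDiffOn_infty.2 fun k => (hκ k).congr ?_, hT 0⟩
  exact (hT 0).eqOn hU (hT k) (hκ 0).continuousOn (hκ k).continuousOn

theorem of_smulLeftCLM {g : E → ℂ} (hU : IsOpen U) (hg : g.HasTemperateGrowth)
    (hg₀ : ∀ x ∈ U, g x ≠ 0) (h : IsRepresentedOn (TemperedDistribution.smulLeftCLM F g T) κ U μ) :
    IsRepresentedOn T (g⁻¹ • κ) U μ := by
  intro f hfc hfU
  have hquot : ContDiff ℝ ∞ (g⁻¹ * (f : E → ℂ)) :=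
    contDiff_mul_of_tsupport_subset hU (hg.1.contDiffOn.inv hg₀) f.smooth' hfU
  let q : 𝓢(E, ℂ) := HasCompactSupport.toSchwartzMap hfc.mul_left hquot
  have hgq : SchwartzMap.smulLeftCLM ℂ g q = f := by
    ext x
    rw [SchwartzMap.smulLeftCLM_apply_apply hg]
    change g x * ((g x)⁻¹ * f x) = f x
    by_cases hx : x ∈ U
    · exact mul_inv_cancel_left₀ (hg₀ x hx) _
    · simp [image_eq_zero_of_notMem_tsupport fun hx' => hx (hfU hx')]
  calc T f = TemperedDistribution.smulLeftCLM F g T q := by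
        rw [TemperedDistribution.smulLeftCLM_apply_apply, hgq]
    _ = ∫ x, q x • κ x ∂μ :=
        h q hfc.mul_left (tsupport_mul_subset_right.trans hfU)
    _ = ∫ x, f x • (g⁻¹ • κ) x ∂μ := by
        congr 1 with x
        simp [q, smul_smul, mul_comm]

end IsRepresentedOn

end Representation

section TemperedDistribution

variable {E F : Type*} [NormedAddCommGroup E] [NormedAddCommGroup F] [NormedSpace ℂ F]
  [MeasurableSpace E] [BorelSpace E] {a : E → F}

theorem integrable_schwartzMap_smul [NormedSpace ℝ E] [SecondCountableTopology E]
    {μ : Measure E} [μ.HasTemperateGrowth]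
    (ha : a.HasTemperateGrowth) (u : 𝓢(E, ℂ)) : Integrable (fun x => u x • a x) μ :=
  (bilinLeftCLM (ContinuousLinearMap.lsmul ℂ ℂ) ha u).integrable

theorem lineDerivOp_toTemperedDistribution [NormedSpace ℝ E] [FiniteDimensional ℝ E]
    {μ : Measure E} [μ.IsAddHaarMeasure] (ha : a.HasTemperateGrowth) (v : E) :
    ∂_{v} (ha.toTemperedDistribution μ) =
      (hasTemperateGrowth_fderiv_apply ha v).toTemperedDistribution μ := by
  ext u
  have hparts : ∫ x, u x • fderiv ℝ a x v ∂μ = -∫ x, fderiv ℝ u x v • a x ∂μ :=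
    integral_smul_fderiv_eq_neg_fderiv_smul_of_integrable
      (integrable_schwartzMap_smul ha (∂_{v} u))
      (integrable_schwartzMap_smul (hasTemperateGrowth_fderiv_apply ha v) u)
      (integrable_schwartzMap_smul ha u)
      (fun x _ => u.differentiable x) (fun x _ => ha.1.differentiable (by simp) x)
  simp [hparts, SchwartzMap.lineDerivOp_apply_eq_fderiv, integral_neg]

variable [InnerProductSpace ℝ E] [FiniteDimensional ℝ E]

theorem laplacian_toTemperedDistribution {μ : Measure E} [μ.IsAddHaarMeasure]
    (ha : a.HasTemperateGrowth) (hΔa : (Δ a).HasTemperateGrowth) :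
    Δ (ha.toTemperedDistribution μ) = hΔa.toTemperedDistribution μ := by
  let b := stdOrthonormalBasis ℝ E
  have hda (i) := hasTemperateGrowth_fderiv_apply ha (b i)
  have hdda (i) := hasTemperateGrowth_fderiv_apply (hda i) (b i)
  ext u
  simp only [TemperedDistribution.laplacian_eq_sum b, lineDerivOp_toTemperedDistribution]
  calc (∑ i, (hdda i).toTemperedDistribution μ) u
      = ∑ i, ∫ x, u x • fderiv ℝ (fun y => fderiv ℝ a y (b i)) x (b i) ∂μ := by
        simp
    _ = ∫ x, u x • Δ a x ∂μ := by
        rw [← integral_finsetSum _ fun i _ => integrable_schwartzMap_smul (hdda i) u,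
          laplacian_eq_sum_fderiv_fderiv_apply b (contDiff_infty.1 ha.1 2)]
        simp only [Finset.smul_sum]

theorem fourier_laplacian (T : 𝓢'(E, F)) :
    𝓕 (Δ T) = TemperedDistribution.smulLeftCLM F
      (fun x => ((-(2 * Real.pi) ^ 2 * ‖x‖ ^ 2 : ℝ) : ℂ)) (𝓕 T) := by
  have hnorm : (fun x : E => ((‖x‖ ^ 2 : ℝ) : ℂ)).HasTemperateGrowth := by fun_prop
  have hsymbol : (fun x : E => ((-(2 * Real.pi) ^ 2 * ‖x‖ ^ 2 : ℝ) : ℂ)) =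
      ((-(2 * Real.pi) ^ 2 : ℝ) : ℂ) • fun x => ((‖x‖ ^ 2 : ℝ) : ℂ) := by
    ext x
    simp
  have hΔ : Δ T = ((-(2 * Real.pi) ^ 2 : ℝ) : ℂ) •
      TemperedDistribution.fourierMultiplierCLM F (fun x => ((‖x‖ ^ 2 : ℝ) : ℂ)) T :=
    TemperedDistribution.laplacian_eq_fourierMultiplierCLM T
  rw [hΔ, fourier_smul, TemperedDistribution.fourierMultiplierCLM_apply, fourier_fourierInv_eq,
    hsymbol, TemperedDistribution.smulLeftCLM_smul hnorm, smul_apply]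

theorem fourier_toTemperedDistribution_apply [CompleteSpace F] (ha : a.HasTemperateGrowth)
    (hint : Integrable a) (u : 𝓢(E, ℂ)) :
    𝓕 (ha.toTemperedDistribution volume) u = ∫ x, u x • 𝓕 a x := by
  have hflip := VectorFourier.integral_fourierIntegral_smul_eq_flip (L := innerₗ E)
    Real.continuous_fourierChar continuous_inner (u.integrable (μ := volume)) hint
  rw [flip_innerₗ] at hflip
  simpa [SchwartzMap.fourier_coe] using! hflip

end TemperedDistribution

section Conormal

variable {E F : Type*} [NormedAddCommGroup E] [InnerProductSpace ℝ E] [FiniteDimensional ℝ E]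
  [MeasurableSpace E] [BorelSpace E] [NormedAddCommGroup F] [NormedSpace ℂ F]
  {m : ℝ} {a : E → F}

namespace IsSymbol

theorem contDiff_fourier (ha : IsSymbol m a) {k : ℕ} (hmk : m + k < -finrank ℝ E) :
    ContDiff ℝ k (𝓕 a) := by
  refine Real.contDiff_fourier (N := (k : ℕ∞)) fun j hj => ha.integrable_pow_norm_mul_norm ?_
  have : (j : ℝ) ≤ k := by exact_mod_cast hj
  linarith

theorem isRepresentedOn_fourier [CompleteSpace F] (ha : IsSymbol m a) (hm : m < -finrank ℝ E)
    (U : Set E) :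
    IsRepresentedOn (𝓕 (ha.hasTemperateGrowth.toTemperedDistribution volume)) (𝓕 a) U := by
  have hnorm : Integrable (fun ξ => ‖a ξ‖) := by
    simpa using ha.integrable_pow_norm_mul_norm (k := 0) (by simpa using hm)
  have hint : Integrable a :=
    (integrable_norm_iff ha.contDiff.continuous.aestronglyMeasurable).1 hnorm
  exact fun f _ _ => fourier_toTemperedDistribution_apply ha.hasTemperateGrowth hint f

theorem exists_contDiffOn_isRepresentedOn_fourier [CompleteSpace F] {k : ℕ} (N : ℕ)
    (ha : IsSymbol m a) (hN : m + k < 2 * N - finrank ℝ E) :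
    ∃ κ, ContDiffOn ℝ k κ {x | x ≠ 0} ∧
      IsRepresentedOn (𝓕 (ha.hasTemperateGrowth.toTemperedDistribution volume)) κ {x | x ≠ 0} := by
  induction N generalizing m a with
  | zero =>
    have hmk : m + k < -finrank ℝ E := by simpa using hN
    refine ⟨𝓕 a, (ha.contDiff_fourier hmk).contDiffOn, ha.isRepresentedOn_fourier ?_ _⟩
    linarith [k.cast_nonneg (α := ℝ)]
  | succ N ih =>
    obtain ⟨κ, hκ, hrep⟩ := ih ha.laplacian (by push_cast at hN; linarith)
    rw [← laplacian_toTemperedDistribution ha.hasTemperateGrowth, fourier_laplacian] at hrep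
    have hg : (fun x : E => ((-(2 * Real.pi) ^ 2 * ‖x‖ ^ 2 : ℝ) : ℂ)).HasTemperateGrowth := by
      fun_prop
    have hg₀ : ∀ x ∈ {x : E | x ≠ 0}, ((-(2 * Real.pi) ^ 2 * ‖x‖ ^ 2 : ℝ) : ℂ) ≠ 0 := by
      simp [Real.pi_ne_zero]
    exact ⟨_, ((hg.1.of_le (mod_cast le_top)).contDiffOn.inv hg₀).smul hκ,
      hrep.of_smulLeftCLM isOpen_ne hg hg₀⟩

end IsSymbol

theorem stmt10_general [CompleteSpace F] (ha : IsSymbol m a) :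
    ∃ κ : E → F, ContDiffOn ℝ ∞ κ {x | x ≠ 0} ∧
      ∀ f : E → ℂ, ContDiff ℝ ∞ f → HasCompactSupport f → tsupport f ⊆ {x | x ≠ 0} →
        Integrable (fun ξ => 𝓕 f ξ • a ξ) ∧ ∫ ξ, 𝓕 f ξ • a ξ = ∫ x, f x • κ x := by
  obtain ⟨κ, hκ, hrep⟩ := IsRepresentedOn.exists_contDiffOn_infty isOpen_ne fun k => by
    obtain ⟨N, hN⟩ := exists_nat_gt (m + k + finrank ℝ E)
    exact ha.exists_contDiffOn_isRepresentedOn_fourier N (by linarith [N.cast_nonneg (α := ℝ)])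
  refine ⟨κ, hκ, fun f hf hfc hfU => ?_⟩
  let u : 𝓢(E, ℂ) := hfc.toSchwartzMap hf
  have hu : ⇑(𝓕 u : 𝓢(E, ℂ)) = 𝓕 f := SchwartzMap.fourier_coe u
  rw [← hu]
  exact ⟨integrable_schwartzMap_smul ha.hasTemperateGrowth (𝓕 u), hrep u hfc hfU⟩

end Conormal

/-- The singular support of the conormal distribution `P_a (f) = ∫ a (ξ) 𝓕 f (ξ) dξ`
associated with a symbol `a` of order `m` is contained in `{0}`: away from the origin,
`P_a` is given by integration against a function `κ` which is smooth on `ℝⁿ \ {0}`. -/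
theorem stmt10 (n : ℕ) (hn : 1 ≤ n) (m : ℝ)
    (a : EuclideanSpace ℝ (Fin n) → ℂ) (ha : ContDiff ℝ (⊤ : ℕ∞) a)
    (hbound : ∀ i : ℕ, ∃ C : ℝ, ∀ ξ : EuclideanSpace ℝ (Fin n),
      ‖iteratedFDeriv ℝ i a ξ‖ ≤ C * (1 + ‖ξ‖) ^ (m - i)) :
    ∃ κ : EuclideanSpace ℝ (Fin n) → ℂ,
      ContDiffOn ℝ (⊤ : ℕ∞) κ {x : EuclideanSpace ℝ (Fin n) | x ≠ 0} ∧
      ∀ f : EuclideanSpace ℝ (Fin n) → ℂ, ContDiff ℝ (⊤ : ℕ∞) f → HasCompactSupport f →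
        tsupport f ⊆ {x : EuclideanSpace ℝ (Fin n) | x ≠ 0} →
        Integrable (fun ξ => a ξ * 𝓕 f ξ) ∧
        ∫ ξ : EuclideanSpace ℝ (Fin n), a ξ * 𝓕 f ξ =
          ∫ x : EuclideanSpace ℝ (Fin n), κ x * f x := by
  simpa [mul_comm] using stmt10_general ⟨ha, hbound⟩
end
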